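/- arXiv:2201.08355 — 3 statements merged into one kernel-verified Lean document; each statement's English description precedes it below -/
import Mathlib

section
/- Let P0 be a fixed prior probability distribution on the policy space Π, let δ, δ' ∈ (0,1), and let P : ε^N → 𝒫(Π) be any measurable assignment of a posterior distribution to each training sample. Draw S = (E_1,…,E_N) i.i.d. from D, and then draw policies π_1,…,π_L i.i.d. from P(S). Let m̂ = (1/(N·L)) Σ_{i=1}^L Σ_{j=1}^N R(π_i, E_j) denote the empirical estimate of R_S(P(S)). Then with probability at least 1 − δ − δ' over the joint draw of S and π_1,…,π_L: R_D(P(S)) ≥ m̂ − sqrt( log(2/δ') / (2L) ) − sqrt( ( KL(P(S)‖P0) + log(2√N/δ) ) / (2N) ). -/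
open MeasureTheory Real
open scoped ENNReal

open scoped Classical in
/-- Kullback–Leibler divergence between measures, valued in `ℝ≥0∞`
(`⊤` when `P` is not absolutely continuous w.r.t. `P0`, or the integral diverges). -/
noncomputable def klDiv {Pol : Type*} [MeasurableSpace Pol] (P P0 : Measure Pol) : ℝ≥0∞ :=
  if P ≪ P0 ∧ Integrable (fun x => Real.log (P.rnDeriv P0 x).toReal) P then
    ENNReal.ofReal (∫ x, Real.log (P.rnDeriv P0 x).toReal ∂P)
  else ⊤

/-- True expected reward: `R_D(P) = E_{E∼D} E_{π∼P}[R(π,E)]`. -/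
noncomputable def trueReward {Pol Env : Type*} [MeasurableSpace Pol] [MeasurableSpace Env]
    (D : Measure Env) (R : Pol → Env → ℝ) (P : Measure Pol) : ℝ :=
  ∫ E, ∫ p, R p E ∂P ∂D

/-! A `c`-sub-Gaussian variable `X` with values in an interval of length at least `2 √c` has a
controlled Gaussian moment: for `c = 1`, integrating `exp (t X - t ^ 2 / 2)` over `t` in the
interval `[a, b]` in which `X` lives recovers at least `exp (X ^ 2 / 2)`, since
`exp (-(t - X) ^ 2 / 2)` has integral at least `1` over every interval of length `2` containing `X`,
while each `exp (t X - t ^ 2 / 2)` has expectation at most `1`. Hence `E exp (X ^ 2 / 2) ≤ b - a`.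
Applied to the gap between empirical and true reward of one policy on `N` environments (Hoeffding:
sub-Gaussian with `c = 1 / (4 N)`, interval of length `1`), this is Maurer's constant `2 √N` in
`E exp (2 N gap ^ 2) ≤ 2 √N`.

Averaging over the prior, Markov's inequality and the Donsker–Varadhan change of measure make the
resulting bound on `∫ gap ^ 2` uniform over all posteriors, hence applicable to one chosen from `S`;
Jensen's inequality passes to the gap of the mean rewards. Conditionally on `S`, the sampled
policies are independent, so Hoeffding's inequality controls the Monte Carlo error, and a union
bound combines the two failure events. -/

open ProbabilityTheory
open scoped NNReal BigOperators

section SubgaussianSquare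

lemma one_le_intervalIntegral_exp_neg_sq_of_length_two {a u : ℝ} (hau : a ≤ u)
    (hua : u ≤ a + 2) : 1 ≤ ∫ t in a..a + 2, exp (-((t - u) ^ 2 / 2)) := by
  -- The polynomial minorant is `(1 - x / n) ^ n ≤ exp (-x)` at `n = 2`: its integral over the
  -- window is explicit, and minimal when `u` is an endpoint, where it is `16 / 15`.
  have hpoly : ∀ t ∈ Set.Icc a (a + 2),
      (1 - (t - u) ^ 2 / 4) ^ 2 ≤ exp (-((t - u) ^ 2 / 2)) := by
    rintro t ⟨hat, hta⟩
    have hsq : (t - u) ^ 2 / 2 ≤ (2 : ℕ) := by push_cast; nlinarith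
    convert one_sub_div_pow_le_exp_neg hsq using 2
    push_cast
    ring
  calc (1 : ℝ) ≤ 16 / 15 + (u - a) * (a + 2 - u) / 2 + ((u - a) * (a + 2 - u)) ^ 2 / 8 := by
        have : 0 ≤ (u - a) * (a + 2 - u) :=
          mul_nonneg (sub_nonneg.2 hau) (sub_nonneg.2 hua)
        nlinarith
    _ = ∫ t in a..a + 2, (1 - (t - u) ^ 2 / 4) ^ 2 := by
        have hderiv : ∀ t ∈ Set.uIcc a (a + 2), HasDerivAt
            (fun t => t - (t - u) ^ 3 / 6 + (t - u) ^ 5 / 80) ((1 - (t - u) ^ 2 / 4) ^ 2) t := by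
          intro t _
          have h := (hasDerivAt_id' t).sub_const u
          refine (((hasDerivAt_id' t).sub ((h.pow 3).div_const 6)).add
            ((h.pow 5).div_const 80)).congr_deriv ?_
          push_cast
          ring
        rw [intervalIntegral.integral_eq_sub_of_hasDerivAt hderiv
          (Continuous.intervalIntegrable (by fun_prop) _ _)]
        ring
    _ ≤ ∫ t in a..a + 2, exp (-((t - u) ^ 2 / 2)) :=
        intervalIntegral.integral_mono_on (by linarith)
          (Continuous.intervalIntegrable (by fun_prop) _ _)
          (Continuous.intervalIntegrable (by fun_prop) _ _) hpoly

lemma one_le_intervalIntegral_exp_neg_sq {a b u : ℝ} (hab : a + 2 ≤ b)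
    (hu : u ∈ Set.Icc a b) : 1 ≤ ∫ t in a..b, exp (-((t - u) ^ 2 / 2)) := by
  have hle : max a (u - 2) ≤ u := max_le hu.1 (by linarith)
  have hge : u ≤ max a (u - 2) + 2 := by linarith [le_max_right a (u - 2)]
  have hsub : max a (u - 2) + 2 ≤ b := by
    linarith [max_le (show a ≤ b - 2 by linarith) (show u - 2 ≤ b - 2 by linarith [hu.2])]
  exact (one_le_intervalIntegral_exp_neg_sq_of_length_two hle hge).trans <|
    intervalIntegral.integral_mono_interval (le_max_left _ _) (by linarith) hsub
      (ae_of_all _ fun _ => (exp_pos _).le) (Continuous.intervalIntegrable (by fun_prop) _ _)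

lemma exp_sq_div_two_le_intervalIntegral {a b u : ℝ} (hab : a + 2 ≤ b)
    (hu : u ∈ Set.Icc a b) : exp (u ^ 2 / 2) ≤ ∫ t in a..b, exp (t * u - t ^ 2 / 2) := by
  have hsplit : ∀ t, exp (t * u - t ^ 2 / 2) = exp (u ^ 2 / 2) * exp (-((t - u) ^ 2 / 2)) :=
    fun t => by rw [← exp_add]; ring_nf
  simp_rw [hsplit, intervalIntegral.integral_const_mul]
  exact le_mul_of_one_le_right (exp_pos _).le (one_le_intervalIntegral_exp_neg_sq hab hu)

variable {Ω : Type*} [MeasurableSpace Ω] {μ : Measure Ω} {X : Ω → ℝ} {a b : ℝ}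

lemma lintegral_exp_mul_sub_sq_le_one (hX : HasSubgaussianMGF X 1 μ) (t : ℝ) :
    ∫⁻ ω, ENNReal.ofReal (exp (t * X ω - t ^ 2 / 2)) ∂μ ≤ 1 := by
  simp_rw [exp_sub]
  rw [← ofReal_integral_eq_lintegral_ofReal ((hX.integrable_exp_mul t).div_const _)
    (ae_of_all _ fun _ => by positivity), integral_div, ENNReal.ofReal_le_one]
  exact (div_le_one (exp_pos _)).2 (by simpa [mgf] using hX.mgf_le t)

lemma lintegral_exp_sq_div_two_le [SFinite μ] (hX : HasSubgaussianMGF X 1 μ)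
    (hab : a + 2 ≤ b) (hXab : ∀ᵐ ω ∂μ, X ω ∈ Set.Icc a b) :
    ∫⁻ ω, ENNReal.ofReal (exp (X ω ^ 2 / 2)) ∂μ ≤ ENNReal.ofReal (b - a) := by
  have hmeas : AEMeasurable (fun x : Ω × ℝ => ENNReal.ofReal (exp (x.2 * X x.1 - x.2 ^ 2 / 2)))
      (μ.prod (volume.restrict (Set.Ioc a b))) := by
    have hXfst : AEMeasurable (fun x : Ω × ℝ => X x.1) (μ.prod (volume.restrict (Set.Ioc a b))) :=
      hX.aemeasurable.comp_fst
    exact ((measurable_snd.aemeasurable.mul hXfst).sub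
      ((measurable_snd.pow_const 2).div_const 2).aemeasurable).exp.ennreal_ofReal
  calc ∫⁻ ω, ENNReal.ofReal (exp (X ω ^ 2 / 2)) ∂μ
      ≤ ∫⁻ ω, (∫⁻ t in Set.Ioc a b, ENNReal.ofReal (exp (t * X ω - t ^ 2 / 2))) ∂μ := by
        refine lintegral_mono_ae (hXab.mono fun ω hω => ?_)
        rw [← ofReal_integral_eq_lintegral_ofReal
          (Continuous.integrableOn_Ioc (by fun_prop)) (ae_of_all _ fun _ => (exp_pos _).le),
          ← intervalIntegral.integral_of_le (by linarith)]
        exact ENNReal.ofReal_le_ofReal (exp_sq_div_two_le_intervalIntegral hab hω)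
    _ = ∫⁻ t in Set.Ioc a b, (∫⁻ ω, ENNReal.ofReal (exp (t * X ω - t ^ 2 / 2)) ∂μ) :=
        lintegral_lintegral_swap hmeas
    _ ≤ ∫⁻ _ in Set.Ioc a b, 1 := lintegral_mono fun t => lintegral_exp_mul_sub_sq_le_one hX t
    _ = ENNReal.ofReal (b - a) := by simp

lemma lintegral_exp_sq_div_le [SFinite μ] {c : ℝ≥0} (hc : 0 < c) (hX : HasSubgaussianMGF X c μ)
    (hab : a + 2 * √c ≤ b) (hXab : ∀ᵐ ω ∂μ, X ω ∈ Set.Icc a b) :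
    ∫⁻ ω, ENNReal.ofReal (exp (X ω ^ 2 / (2 * c))) ∂μ ≤ ENNReal.ofReal ((b - a) / √c) := by
  have : 0 < √(c : ℝ) := sqrt_pos.2 hc
  have hσ_sq : √(c : ℝ) ^ 2 = c := sq_sqrt c.2
  have hscaled : HasSubgaussianMGF (fun ω => (√(c : ℝ))⁻¹ * X ω) 1 μ := by
    convert hX.const_mul (√(c : ℝ))⁻¹ using 1
    ext
    change (1 : ℝ) = (√(c : ℝ))⁻¹ ^ 2 * c
    rw [inv_pow, hσ_sq, inv_mul_cancel₀ (NNReal.coe_ne_zero.2 hc.ne')]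
  have hmem : ∀ᵐ ω ∂μ, (√(c : ℝ))⁻¹ * X ω ∈ Set.Icc ((√(c : ℝ))⁻¹ * a) ((√(c : ℝ))⁻¹ * b) := by
    filter_upwards [hXab] with ω hω
    exact ⟨by gcongr; exact hω.1, by gcongr; exact hω.2⟩
  have hlen : (√(c : ℝ))⁻¹ * a + 2 ≤ (√(c : ℝ))⁻¹ * b := by
    calc (√(c : ℝ))⁻¹ * a + 2 = (√(c : ℝ))⁻¹ * (a + 2 * √c) := by field_simp
      _ ≤ (√(c : ℝ))⁻¹ * b := by gcongr
  convert lintegral_exp_sq_div_two_le hscaled hlen hmem using 5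
  · rw [mul_pow, inv_pow, hσ_sq]
    field_simp
  · field_simp

end SubgaussianSquare

section IidAverage

variable {ι Ω : Type*} [Fintype ι] [MeasurableSpace Ω]

lemma measurable_expect {f : ι → Ω → ℝ} (hf : ∀ i, Measurable (f i)) :
    Measurable fun ω => 𝔼 i, f i ω := by
  simp_rw [Fintype.expect_eq_sum_div_card]
  fun_prop

lemma expect_mem_Icc [Nonempty ι] {f : ι → ℝ} {a b : ℝ} (hf : ∀ i, f i ∈ Set.Icc a b) :
    𝔼 i, f i ∈ Set.Icc a b :=
  ⟨Finset.le_expect Finset.univ_nonempty fun i _ => (hf i).1,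
    Finset.expect_le Finset.univ_nonempty fun i _ => (hf i).2⟩

lemma integral_mem_Icc {ν : Measure Ω} [IsProbabilityMeasure ν] {g : Ω → ℝ} {a b : ℝ}
    (hg : Measurable g) (hgab : ∀ x, g x ∈ Set.Icc a b) : ∫ x, g x ∂ν ∈ Set.Icc a b :=
  (convex_Icc a b).integral_mem isClosed_Icc (ae_of_all _ hgab)
    (.of_mem_Icc a b hg.aemeasurable (ae_of_all _ hgab))

variable [Nonempty ι] {ν : Measure Ω} [IsProbabilityMeasure ν] {g : Ω → ℝ} {a b : ℝ}

lemma hasSubgaussianMGF_expect_sub_integral (hg : Measurable g)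
    (hgab : ∀ x, g x ∈ Set.Icc a b) :
    HasSubgaussianMGF (fun ω : ι → Ω => 𝔼 i, g (ω i) - ∫ x, g x ∂ν)
      ((‖b - a‖₊ / 2) ^ 2 / Fintype.card ι) (Measure.pi fun _ => ν) := by
  have hindep : iIndepFun (fun (i : ι) (ω : ι → Ω) => g (ω i) - ∫ x, g x ∂ν)
      (Measure.pi fun _ => ν) :=
    iIndepFun_pi (X := fun _ x => g x - ∫ x, g x ∂ν) fun _ => (hg.sub_const _).aemeasurable
  have hcoord : ∀ i : ι, HasSubgaussianMGF (fun ω : ι → Ω => g (ω i) - ∫ x, g x ∂ν)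
      ((‖b - a‖₊ / 2) ^ 2) (Measure.pi fun _ => ν) := fun i =>
    .of_map (Y := fun ω : ι → Ω => ω i) (X := fun x => g x - ∫ x, g x ∂ν)
      (measurable_pi_apply i).aemeasurable <| by
      rw [(measurePreserving_eval (fun _ : ι => ν) i).map_eq]
      exact hasSubgaussianMGF_of_mem_Icc hg.aemeasurable (ae_of_all _ hgab)
  have hcard : (Fintype.card ι : ℝ) ≠ 0 := Nat.cast_ne_zero.2 Fintype.card_ne_zero
  convert (HasSubgaussianMGF.sum_of_iIndepFun hindep (s := Finset.univ)
    fun i _ => hcoord i).const_mul (Fintype.card ι : ℝ)⁻¹ using 1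
  · ext ω
    simp only [Fintype.expect_eq_sum_div_card, Finset.sum_sub_distrib, Finset.sum_const,
      Finset.card_univ, nsmul_eq_mul]
    field_simp
  · ext
    change _ = (Fintype.card ι : ℝ)⁻¹ ^ 2 * ((∑ _ : ι, (‖b - a‖₊ / 2) ^ 2 : ℝ≥0) : ℝ)
    rw [Finset.sum_const, Finset.card_univ, nsmul_eq_mul]
    push_cast
    field_simp

lemma measure_le_expect_sub_integral_le (hg : Measurable g) (hgab : ∀ x, g x ∈ Set.Icc a b)
    {t : ℝ} (ht : 0 ≤ t) :
    (Measure.pi fun _ : ι => ν) {ω | t ≤ 𝔼 i, g (ω i) - ∫ x, g x ∂ν} ≤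
      ENNReal.ofReal (exp (-(2 * Fintype.card ι * t ^ 2 / (b - a) ^ 2))) := by
  rw [← ofReal_measureReal]
  refine ENNReal.ofReal_le_ofReal <|
    ((hasSubgaussianMGF_expect_sub_integral hg hgab).measure_ge_le ht).trans_eq ?_
  push_cast
  rw [norm_eq_abs, div_pow, sq_abs]
  field_simp

lemma lintegral_exp_sq_expect_sub_integral_le (hab : a < b) (hg : Measurable g)
    (hgab : ∀ x, g x ∈ Set.Icc a b) :
    ∫⁻ ω : ι → Ω, ENNReal.ofReal
      (exp (2 * Fintype.card ι * (𝔼 i, g (ω i) - ∫ x, g x ∂ν) ^ 2 / (b - a) ^ 2))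
      ∂(Measure.pi fun _ => ν) ≤ ENNReal.ofReal (2 * √(Fintype.card ι)) := by
  have hba : 0 < b - a := sub_pos.2 hab
  have : 0 < √(Fintype.card ι : ℝ) := sqrt_pos.2 (Nat.cast_pos.2 Fintype.card_pos)
  have hn_one : 1 ≤ √(Fintype.card ι : ℝ) :=
    one_le_sqrt.2 (Nat.one_le_cast.2 Fintype.card_pos)
  have hc : (((‖b - a‖₊ / 2) ^ 2 / Fintype.card ι : ℝ≥0) : ℝ) =
      ((b - a) / 2) ^ 2 / Fintype.card ι := by
    push_cast
    rw [norm_of_nonneg hba.le]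
  have hσ : √(((‖b - a‖₊ / 2) ^ 2 / Fintype.card ι : ℝ≥0) : ℝ) =
      (b - a) / 2 / √(Fintype.card ι) := by
    rw [hc, sqrt_div (by positivity), sqrt_sq (by positivity)]
  have hmem : ∀ ω : ι → Ω, 𝔼 i, g (ω i) - ∫ x, g x ∂ν ∈
      Set.Icc (a - ∫ x, g x ∂ν) (b - ∫ x, g x ∂ν) := fun ω => by
    have h := expect_mem_Icc fun i => hgab (ω i)
    exact ⟨sub_le_sub_right h.1 _, sub_le_sub_right h.2 _⟩
  convert lintegral_exp_sq_div_le (by simp [hba.ne', Fintype.card_pos])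
    (hasSubgaussianMGF_expect_sub_integral hg hgab) ?_ (ae_of_all _ hmem) using 5
  · rw [hc]
    field_simp
  · rw [hσ]
    field_simp
    ring
  · rw [hσ]
    have : (b - a) / √(Fintype.card ι) ≤ b - a := div_le_self hba.le hn_one
    calc _ = a - ∫ x, g x ∂ν + (b - a) / √(Fintype.card ι) := by ring
      _ ≤ b - ∫ x, g x ∂ν := by linarith

end IidAverage

lemma exp_neg_two_mul_sq_sqrt_log_div_le {n δ : ℝ} (hn : 0 < n) (hδ : δ ∈ Set.Ioo (0 : ℝ) 1) :
    exp (-(2 * n * √(log (2 / δ) / (2 * n)) ^ 2)) ≤ δ := by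
  have hone : 1 ≤ 2 / δ := (one_le_div hδ.1).2 (by linarith [hδ.2])
  rw [sq_sqrt (div_nonneg (log_nonneg hone) (by positivity)),
    mul_div_cancel₀ _ (by positivity), exp_neg, exp_log (by linarith), inv_div]
  linarith [hδ.1]

section IidKernel

variable {α Ω : Type*} [MeasurableSpace α] [MeasurableSpace Ω]

lemma bind_map_prodMk_eq_compProd (μ : Measure α) [SFinite μ] (κ : Kernel α Ω)
    [IsSFiniteKernel κ] : (μ.bind fun x => (κ x).map fun y => (x, y)) = μ ⊗ₘ κ := by
  rw [Measure.compProd_eq_comp_prod]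
  congr with x : 1
  rw [Kernel.prod_apply, Kernel.id_apply, Measure.dirac_prod]

variable (ι : Type*) [Fintype ι] (κ : Kernel α Ω) [IsMarkovKernel κ]

/-- The kernel sending `x` to the law of a family, indexed by `ι`, of independent samples of
`κ x`; with `κ` the posterior it models the draw of `π_1, …, π_L`. -/
noncomputable def iidKernel : Kernel α (ι → Ω) where
  toFun x := Measure.pi fun _ => κ x
  measurable' := by
    refine .measure_of_isPiSystem_of_isProbabilityMeasure generateFrom_pi.symm isPiSystem_pi ?_
    rintro _ ⟨s, hs, rfl⟩
    simp only [Measure.pi_pi]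
    exact Finset.measurable_prod _ fun i _ => κ.measurable_coe (hs i (Set.mem_univ i))

lemma iidKernel_apply (x : α) : iidKernel ι κ x = Measure.pi fun _ => κ x := rfl

instance : IsMarkovKernel (iidKernel ι κ) :=
  ⟨fun x => by rw [iidKernel_apply]; infer_instance⟩

variable {ι} [Nonempty ι]

lemma compProd_iidKernel_le_expect_sub_integral_le (μ : Measure α) [IsProbabilityMeasure μ]
    {g : α → Ω → ℝ} (hg : Measurable (Function.uncurry g)) {a b : ℝ}
    (hgab : ∀ x y, g x y ∈ Set.Icc a b) {t : ℝ} (ht : 0 ≤ t) :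
    (μ ⊗ₘ iidKernel ι κ) {x | t ≤ 𝔼 i, g x.1 (x.2 i) - ∫ y, g x.1 y ∂κ x.1} ≤
      ENNReal.ofReal (exp (-(2 * Fintype.card ι * t ^ 2 / (b - a) ^ 2))) := by
  have hmean : Measurable fun x => ∫ y, g x y ∂κ x :=
    (StronglyMeasurable.integral_kernel_prod_right' (κ := κ) hg.stronglyMeasurable).measurable
  have havg : Measurable fun x : α × (ι → Ω) => 𝔼 i, g x.1 (x.2 i) :=
    measurable_expect fun i =>
      hg.comp (measurable_fst.prodMk ((measurable_pi_apply i).comp measurable_snd))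
  have hmeas : MeasurableSet
      {x : α × (ι → Ω) | t ≤ 𝔼 i, g x.1 (x.2 i) - ∫ y, g x.1 y ∂κ x.1} :=
    measurableSet_le measurable_const (havg.sub (hmean.comp measurable_fst))
  rw [Measure.compProd_apply hmeas]
  calc _ ≤ ∫⁻ _, ENNReal.ofReal (exp (-(2 * Fintype.card ι * t ^ 2 / (b - a) ^ 2))) ∂μ :=
        lintegral_mono fun x =>
          measure_le_expect_sub_integral_le (hg.comp measurable_prodMk_left) (hgab x) ht
    _ = _ := by simp

lemma compProd_iidKernel_sqrt_log_le_expect_sub_integral_le (μ : Measure α)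
    [IsProbabilityMeasure μ] {g : α → Ω → ℝ} (hg : Measurable (Function.uncurry g))
    (hg01 : ∀ x y, g x y ∈ Set.Icc (0 : ℝ) 1) {δ : ℝ} (hδ : δ ∈ Set.Ioo (0 : ℝ) 1) :
    (μ ⊗ₘ iidKernel ι κ) {x | √(log (2 / δ) / (2 * Fintype.card ι)) ≤
      𝔼 i, g x.1 (x.2 i) - ∫ y, g x.1 y ∂κ x.1} ≤ ENNReal.ofReal δ := by
  refine (compProd_iidKernel_le_expect_sub_integral_le κ μ hg hg01 (sqrt_nonneg _)).trans
    (ENNReal.ofReal_le_ofReal ?_)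
  rw [sub_zero, one_pow, div_one]
  exact exp_neg_two_mul_sq_sqrt_log_div_le (Nat.cast_pos.2 Fintype.card_pos) hδ

end IidKernel

lemma compProd_preimage_fst_le {α Ω : Type*} [MeasurableSpace α] [MeasurableSpace Ω]
    (μ : Measure α) [SFinite μ] (κ : Kernel α Ω) [IsMarkovKernel κ] (s : Set α) :
    (μ ⊗ₘ κ) (Prod.fst ⁻¹' s) ≤ μ s :=
  (Measure.le_map_apply measurable_fst.aemeasurable s).trans_eq
    (congrArg (· s) (Measure.fst_compProd μ κ))

lemma ofReal_one_sub_sub_le_measure {Ω : Type*} [MeasurableSpace Ω] {μ : Measure Ω}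
    [IsProbabilityMeasure μ] {s t u : Set Ω} {δ δ' : ℝ} (hδ : 0 ≤ δ) (hδ' : 0 ≤ δ')
    (hs : μ s ≤ ENNReal.ofReal δ) (ht : μ t ≤ ENNReal.ofReal δ') (hu : sᶜ ∩ tᶜ ⊆ u) :
    ENNReal.ofReal (1 - δ - δ') ≤ μ u := by
  have hcompl : uᶜ ⊆ s ∪ t := by rwa [Set.compl_subset_comm, Set.compl_union]
  rw [ENNReal.ofReal_sub _ hδ', ENNReal.ofReal_sub _ hδ, ENNReal.ofReal_one, tsub_tsub,
    tsub_le_iff_right]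
  calc 1 = μ (u ∪ uᶜ) := by simp
    _ ≤ μ u + (μ s + μ t) :=
        (measure_union_le _ _).trans
          (add_le_add_right ((measure_mono hcompl).trans (measure_union_le _ _)) _)
    _ ≤ μ u + (ENNReal.ofReal δ + ENNReal.ofReal δ') := by gcongr

section ChangeOfMeasure

variable {Ω : Type*} [MeasurableSpace Ω] {μ ν : Measure Ω} [IsProbabilityMeasure μ]

lemma klDiv_eq_informationTheory_klDiv [IsProbabilityMeasure ν] :
    klDiv μ ν = InformationTheory.klDiv μ ν := by
  simp only [klDiv, InformationTheory.klDiv_def, llr_def, probReal_univ, add_sub_cancel_right]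
  congr

lemma integral_le_klDiv_add_log_integral_exp [IsProbabilityMeasure ν] (hkl : klDiv μ ν ≠ ⊤)
    {f : Ω → ℝ} (hf : Integrable f μ) (hexp : Integrable (fun x => exp (f x)) ν) :
    ∫ x, f x ∂μ ≤ (klDiv μ ν).toReal + log (∫ x, exp (f x) ∂ν) := by
  rw [klDiv_eq_informationTheory_klDiv] at hkl ⊢
  obtain ⟨hac, hllr⟩ := InformationTheory.klDiv_ne_top_iff.1 hkl
  have := isProbabilityMeasure_tilted hexp
  have hgibbs := InformationTheory.integral_llr_add_sub_measure_univ_nonneg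
    (hac.trans (absolutelyContinuous_tilted hexp)) (integrable_llr_tilted_right hac hf hllr hexp)
  rw [integral_llr_tilted_right hac hf hexp hllr] at hgibbs
  rw [InformationTheory.toReal_klDiv_of_measure_eq hac (by simp)]
  simp only [probReal_univ] at hgibbs
  linarith

lemma sq_integral_le_integral_sq {f : Ω → ℝ} (hf : MemLp f 2 μ) :
    (∫ x, f x ∂μ) ^ 2 ≤ ∫ x, f x ^ 2 ∂μ :=
  sub_nonneg.1 ((variance_nonneg f μ).trans_eq (variance_eq_sub hf))

end ChangeOfMeasure

theorem measure_exists_klDiv_add_log_lt_integral_le {α Ω : Type*} [MeasurableSpace α]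
    [MeasurableSpace Ω] (μ : Measure α) [SFinite μ] (ν : Measure Ω) [IsProbabilityMeasure ν]
    {F : α → Ω → ℝ} (hF : Measurable (Function.uncurry F)) {C δ : ℝ} (hC : 0 < C) (hδ : 0 < δ)
    (hmoment : ∀ y, ∫⁻ x, ENNReal.ofReal (exp (F x y)) ∂μ ≤ ENNReal.ofReal C) :
    μ {x | ∃ Q : Measure Ω, IsProbabilityMeasure Q ∧ klDiv Q ν ≠ ⊤ ∧ Integrable (F x) Q ∧
      (klDiv Q ν).toReal + log (C / δ) < ∫ y, F x y ∂Q} ≤ ENNReal.ofReal δ := by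
  let Z : α → ℝ≥0∞ := fun x => ∫⁻ y, ENNReal.ofReal (exp (F x y)) ∂ν
  have hexp : Measurable fun x : α × Ω => ENNReal.ofReal (exp (F x.1 x.2)) :=
    hF.exp.ennreal_ofReal
  have hZ_mean : ∫⁻ x, Z x ∂μ ≤ ENNReal.ofReal C := by
    rw [lintegral_lintegral_swap hexp.aemeasurable]
    exact (lintegral_mono hmoment).trans_eq (by simp)
  have hbad : ∀ x, (∃ Q : Measure Ω, IsProbabilityMeasure Q ∧ klDiv Q ν ≠ ⊤ ∧
      Integrable (F x) Q ∧ (klDiv Q ν).toReal + log (C / δ) < ∫ y, F x y ∂Q) →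
      ENNReal.ofReal (C / δ) ≤ Z x := by
    rintro x ⟨Q, _, hkl, hint, hlt⟩
    by_contra! hZ
    have hFx : Measurable fun y => exp (F x y) := (hF.comp measurable_prodMk_left).exp
    have hint_exp : Integrable (fun y => exp (F x y)) ν :=
      (lintegral_ofReal_ne_top_iff_integrable hFx.aestronglyMeasurable
        (ae_of_all _ fun _ => (exp_pos _).le)).1 hZ.ne_top
    have hle : ∫ y, exp (F x y) ∂ν ≤ C / δ := by
      refine ((ENNReal.ofReal_lt_ofReal_iff (by positivity)).1 ?_).le
      rwa [ofReal_integral_eq_lintegral_ofReal hint_exp (ae_of_all _ fun _ => (exp_pos _).le)]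
    have hlog := log_le_log (integral_exp_pos hint_exp) hle
    linarith [integral_le_klDiv_add_log_integral_exp hkl hint hint_exp]
  calc _ ≤ μ {x | ENNReal.ofReal (C / δ) ≤ Z x} := measure_mono hbad
    _ ≤ (∫⁻ x, Z x ∂μ) / ENNReal.ofReal (C / δ) :=
        meas_ge_le_lintegral_div hexp.lintegral_prod_right'.aemeasurable
          (ENNReal.ofReal_pos.2 (by positivity)).ne' ENNReal.ofReal_ne_top
    _ ≤ ENNReal.ofReal C / ENNReal.ofReal (C / δ) := by gcongr
    _ = ENNReal.ofReal δ := by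
        rw [← ENNReal.ofReal_div_of_pos (by positivity), div_div_cancel₀ hC.ne']

lemma expect_expect_fin {N L : ℕ} (f : Fin L → Fin N → ℝ) :
    𝔼 i, 𝔼 j, f i j = 1 / ((N : ℝ) * L) * ∑ i, ∑ j, f i j := by
  simp only [Fintype.expect_eq_sum_div_card, Fintype.card_fin, ← Finset.sum_div]
  rw [div_div, one_div_mul_eq_div]

section Reward

variable {Pol Env ι : Type*} [MeasurableSpace Pol] [MeasurableSpace Env] [Fintype ι]

/-- The empirical reward `R_S(P)` of the posterior `P` on the training sample `S`, with the average
over the environments inside the expectation over policies. -/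
noncomputable def empiricalReward (S : ι → Env) (R : Pol → Env → ℝ) (P : Measure Pol) : ℝ :=
  ∫ p, 𝔼 j, R p (S j) ∂P

/-- The generalization gap of the single policy `p`: its average reward on the sample `S` minus its
expected reward under `D`. -/
noncomputable def rewardGap (D : Measure Env) (R : Pol → Env → ℝ) (S : ι → Env) (p : Pol) : ℝ :=
  𝔼 j, R p (S j) - ∫ E, R p E ∂D

variable (D : Measure Env) {R : Pol → Env → ℝ}

lemma measurable_expect_reward (hR : Measurable (Function.uncurry R)) :
    Measurable fun x : (ι → Env) × Pol => 𝔼 j, R x.2 (x.1 j) :=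
  measurable_expect fun j =>
    hR.comp (measurable_snd.prodMk ((measurable_pi_apply j).comp measurable_fst))

lemma measurable_integral_reward [SFinite D] (hR : Measurable (Function.uncurry R)) :
    Measurable fun p => ∫ E, R p E ∂D :=
  (hR.stronglyMeasurable.integral_prod_right (ν := D)).measurable

lemma measurable_rewardGap [SFinite D] (hR : Measurable (Function.uncurry R)) :
    Measurable (Function.uncurry (rewardGap (ι := ι) D R)) :=
  (measurable_expect_reward hR).sub ((measurable_integral_reward D hR).comp measurable_snd)

variable [Nonempty ι] [IsProbabilityMeasure D]

lemma rewardGap_mem_Icc (hR : Measurable (Function.uncurry R))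
    (hR01 : ∀ p E, R p E ∈ Set.Icc (0 : ℝ) 1) (S : ι → Env) (p : Pol) :
    rewardGap D R S p ∈ Set.Icc (-1 : ℝ) 1 := by
  have havg := expect_mem_Icc fun j => hR01 p (S j)
  have hmean : ∫ E, R p E ∂D ∈ Set.Icc (0 : ℝ) 1 :=
    integral_mem_Icc (hR.comp measurable_prodMk_left) (hR01 p)
  rw [rewardGap]
  exact ⟨by linarith [havg.1, hmean.2], by linarith [havg.2, hmean.1]⟩

lemma integral_rewardGap (hR : Measurable (Function.uncurry R))
    (hR01 : ∀ p E, R p E ∈ Set.Icc (0 : ℝ) 1) (S : ι → Env) (Q : Measure Pol)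
    [IsProbabilityMeasure Q] :
    ∫ p, rewardGap D R S p ∂Q = empiricalReward S R Q - trueReward D R Q := by
  have hswap : trueReward D R Q = ∫ p, ∫ E, R p E ∂D ∂Q :=
    integral_integral_swap (.of_mem_Icc 0 1 (hR.comp measurable_swap).aemeasurable
      (ae_of_all _ fun x => hR01 x.2 x.1))
  rw [hswap]
  exact integral_sub
    (.of_mem_Icc 0 1 ((measurable_expect_reward hR).comp measurable_prodMk_left).aemeasurable
      (ae_of_all _ fun p => expect_mem_Icc fun j => hR01 p (S j)))
    (.of_mem_Icc 0 1 (measurable_integral_reward D hR).aemeasurable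
      (ae_of_all _ fun p => integral_mem_Icc (hR.comp measurable_prodMk_left) (hR01 p)))

theorem measure_exists_sqrt_lt_abs_empiricalReward_sub_trueReward_le
    (hR : Measurable (Function.uncurry R)) (hR01 : ∀ p E, R p E ∈ Set.Icc (0 : ℝ) 1)
    (P0 : Measure Pol) [IsProbabilityMeasure P0] {δ : ℝ} (hδ : 0 < δ) :
    (Measure.pi fun _ : ι => D) {S | ∃ Q : Measure Pol, IsProbabilityMeasure Q ∧
      klDiv Q P0 ≠ ⊤ ∧
      √(((klDiv Q P0).toReal + log (2 * √(Fintype.card ι) / δ)) / (2 * Fintype.card ι)) <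
        |empiricalReward S R Q - trueReward D R Q|} ≤ ENNReal.ofReal δ := by
  have : (0 : ℝ) < Fintype.card ι := Nat.cast_pos.2 Fintype.card_pos
  have hmoment : ∀ p, ∫⁻ S : ι → Env, ENNReal.ofReal
      (exp (2 * Fintype.card ι * rewardGap D R S p ^ 2)) ∂(Measure.pi fun _ => D) ≤
      ENNReal.ofReal (2 * √(Fintype.card ι)) := fun p => by
    simpa [rewardGap] using lintegral_exp_sq_expect_sub_integral_le (ι := ι) (ν := D) zero_lt_one
      (hR.comp measurable_prodMk_left) (hR01 p)
  refine (measure_mono ?_).trans <| measure_exists_klDiv_add_log_lt_integral_le _ P0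
    (((measurable_rewardGap D hR).pow_const 2).const_mul (2 * (Fintype.card ι : ℝ)))
    (by positivity) hδ hmoment
  rintro S ⟨Q, hQ, hkl, hlt⟩
  have hgap : MemLp (rewardGap D R S) 2 Q :=
    memLp_of_bounded (ae_of_all _ (rewardGap_mem_Icc D hR hR01 S))
      ((measurable_rewardGap D hR).comp measurable_prodMk_left).aestronglyMeasurable 2
  refine ⟨Q, hQ, hkl, hgap.integrable_sq.const_mul _, ?_⟩
  rw [← integral_rewardGap D hR hR01 S Q] at hlt
  rw [integral_const_mul]
  calc _ < (∫ p, rewardGap D R S p ∂Q) ^ 2 * (2 * Fintype.card ι) := by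
        rw [← div_lt_iff₀ (by positivity), ← sq_abs]
        exact lt_sq_of_sqrt_lt hlt
    _ ≤ 2 * Fintype.card ι * ∫ p, rewardGap D R S p ^ 2 ∂Q := by
        rw [mul_comm]
        gcongr
        exact sq_integral_le_integral_sq hgap

end Reward

/-- **Computable PAC-Bayes certificate (PAC-Bayes bound + sample convergence bound).**
Draw `S = (E_1,…,E_N) ∼ D^N` and then `π_1,…,π_L` i.i.d. from the posterior `P(S)`;
the joint law is the monadic bind of `D^N` with `S ↦ (S, ·)_* (P(S))^L`.  With
probability at least `1 − δ − δ'` over this joint draw,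
`R_D(P(S)) ≥ m̂ − sqrt(log(2/δ')/(2L)) − sqrt((KL(P(S)‖P0) + log(2√N/δ))/(2N))`,
where `m̂ = (1/(N·L)) Σ_i Σ_j R(π_i, E_j)`.
(When `KL(P(S)‖P0) = ∞` the claimed inequality is vacuous, which is expressed by the
hypothesis `klDiv (P S) P0 ≠ ⊤` guarding the inequality.) -/
theorem pac_bayes_with_sample_convergence
    {Pol Env : Type*} [MeasurableSpace Pol] [MeasurableSpace Env]
    (D : Measure Env) [IsProbabilityMeasure D]
    (R : Pol → Env → ℝ) (hR_meas : Measurable (Function.uncurry R))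
    (hR_bdd : ∀ p E, R p E ∈ Set.Icc (0 : ℝ) 1)
    (P0 : Measure Pol) [IsProbabilityMeasure P0]
    (N L : ℕ) (hN : 0 < N) (hL : 0 < L)
    (δ δ' : ℝ) (hδ : δ ∈ Set.Ioo (0 : ℝ) 1) (hδ' : δ' ∈ Set.Ioo (0 : ℝ) 1)
    (P : (Fin N → Env) → Measure Pol)
    (hP_prob : ∀ S, IsProbabilityMeasure (P S))
    (hP_meas : Measurable P) :
    ENNReal.ofReal (1 - δ - δ') ≤
      ((Measure.pi fun _ : Fin N => D).bind fun S =>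
          (Measure.pi fun _ : Fin L => P S).map fun ps => (S, ps))
        {x : (Fin N → Env) × (Fin L → Pol) | klDiv (P x.1) P0 ≠ ⊤ →
          trueReward D R (P x.1) ≥
            (1 / ((N : ℝ) * L)) * ∑ i : Fin L, ∑ j : Fin N, R (x.2 i) (x.1 j)
              - Real.sqrt (Real.log (2 / δ') / (2 * L))
              - Real.sqrt
                  (((klDiv (P x.1) P0).toReal + Real.log (2 * Real.sqrt N / δ)) / (2 * N))} := by
  have := Fin.pos_iff_nonempty.1 hN
  have := Fin.pos_iff_nonempty.1 hL
  let κ : Kernel (Fin N → Env) Pol := ⟨P, hP_meas⟩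
  have : IsMarkovKernel κ := ⟨hP_prob⟩
  have hjoint : ((Measure.pi fun _ : Fin N => D).bind fun S =>
      (Measure.pi fun _ : Fin L => P S).map fun ps => (S, ps)) =
      (Measure.pi fun _ => D) ⊗ₘ iidKernel (Fin L) κ :=
    bind_map_prodMk_eq_compProd _ (iidKernel (Fin L) κ)
  have hpac := (compProd_preimage_fst_le _ (iidKernel (Fin L) κ) _).trans
    (measure_exists_sqrt_lt_abs_empiricalReward_sub_trueReward_le (ι := Fin N)
      D hR_meas hR_bdd P0 hδ.1)
  have hsample := compProd_iidKernel_sqrt_log_le_expect_sub_integral_le (ι := Fin L) κ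
    (Measure.pi fun _ : Fin N => D) (measurable_expect_reward hR_meas)
    (fun S p => expect_mem_Icc fun j => hR_bdd p (S j)) hδ'
  simp only [Fintype.card_fin] at hsample hpac
  rw [hjoint]
  refine ofReal_one_sub_sub_le_measure hδ.1.le hδ'.1.le hpac hsample fun x hx hkl => ?_
  have hgap := not_lt.1 fun h => hx.1 ⟨P x.1, hP_prob x.1, hkl, h⟩
  have hest : 𝔼 i, 𝔼 j, R (x.2 i) (x.1 j) - empiricalReward x.1 R (P x.1) <
      √(log (2 / δ') / (2 * L)) := not_le.1 hx.2
  rw [← expect_expect_fin]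
  linarith [(abs_le.1 hgap).2]
end

section
/- Let S be a set of states, A a finite nonempty set of actions, f : S × A → S deterministic dynamics, and g : S → ℝ a safety margin function whose zero superlevel set {s : g(s) > 0} is the failure set. Suppose Q : S × A → ℝ satisfies the undiscounted safety Bellman equation Q(s,a) = max{ g(s), min_{a'∈A} Q(f(s,a), a') } for all (s,a). Consider a trajectory s_0, s_1, s_2, … generated by actions a_0, a_1, … via s_{t+1} = f(s_t, a_t), where Q(s_0, a_0) ≤ 0 and, for every t ≥ 1, the applied action satisfies Q(s_t, a_t) = min_{a∈A} Q(s_t, a) or Q(s_t, a_t) ≤ 0 (i.e., a shielded policy which overrides any proposed action a with Q(s_t, a) > 0 by a minimizing backup action). Then for every t ≥ 0, Q(s_t, a_t) ≤ 0 and g(s_t) ≤ 0; in particular the trajectory never enters the failure set. -/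
section Shielding

variable {S A α : Type*} [ConditionallyCompleteLattice α]
  {f : S → A → S} {g : S → α} {Q : S → A → α}

/-- `Q` is a supersolution of the undiscounted safety Bellman equation for the dynamics `f` and the
margin `g`: it dominates the right-hand side, so it can only err towards overstating danger. For
infinite `A`, `⨅` takes the place of the minimum; it has a junk value at the states where `Q` is
unbounded below. -/
def IsSafetySupersolution (f : S → A → S) (g : S → α) (Q : S → A → α) : Prop :=
  ∀ s a, g s ⊔ ⨅ a' : A, Q (f s a) a' ≤ Q s a

namespace IsSafetySupersolution

theorem margin_le (hQ : IsSafetySupersolution f g Q) (s : S) (a : A) : g s ≤ Q s a :=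
  le_sup_left.trans (hQ s a)

theorem minimizer_next_le (hQ : IsSafetySupersolution f g Q) {s : S} {a b : A}
    (hb : ∀ a', Q (f s a) b ≤ Q (f s a) a') : Q (f s a) b ≤ Q s a :=
  have : Nonempty A := ⟨b⟩
  calc
    Q (f s a) b ≤ ⨅ a', Q (f s a) a' := le_ciInf hb
    _ ≤ Q s a := le_sup_right.trans (hQ s a)

end IsSafetySupersolution

-- Asking the backup action to minimize `Q (s t)`, rather than to attain `⨅`, makes that infimum
-- genuine at each state where the argument compares with it.
theorem shielding_safe_general (hQ : IsSafetySupersolution f g Q) {s : ℕ → S} {a : ℕ → A} {c : α}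
    (hdyn : ∀ t, s (t + 1) = f (s t) (a t)) (h0 : Q (s 0) (a 0) ≤ c)
    (hshield : ∀ t, 1 ≤ t → (∀ a', Q (s t) (a t) ≤ Q (s t) a') ∨ Q (s t) (a t) ≤ c) (t : ℕ) :
    Q (s t) (a t) ≤ c ∧ g (s t) ≤ c := by
  have hsafe : Q (s t) (a t) ≤ c := by
    induction t with
    | zero => exact h0
    | succ t ih =>
      obtain hbackup | hproposed := hshield (t + 1) (Nat.le_add_left 1 t)
      · rw [hdyn t] at hbackup ⊢
        exact (hQ.minimizer_next_le hbackup).trans ih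
      · exact hproposed
  exact ⟨hsafe, (hQ.margin_le (s t) (a t)).trans hsafe⟩

end Shielding

/-- **Shielding with the safety Bellman fixed point never enters the failure set.**
Let `Q` satisfy the undiscounted safety Bellman equation
`Q(s,a) = max{g(s), min_{a'} Q(f(s,a), a')}`.  Along a trajectory where the initial
action is safe (`Q(s_0,a_0) ≤ 0`) and every subsequent applied action either minimizes
`Q(s_t,·)` (backup action) or satisfies `Q(s_t,a_t) ≤ 0` (safe proposed action), we have
`Q(s_t,a_t) ≤ 0` and `g(s_t) ≤ 0` for all `t`: the failure set `{s : g(s) > 0}` is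
never entered. -/
theorem shielding_safe
    {S A : Type*} [Fintype A] [Nonempty A]
    (f : S → A → S) (g : S → ℝ) (Q : S → A → ℝ)
    (hQ : ∀ s a, Q s a = max (g s) (⨅ a' : A, Q (f s a) a'))
    (s : ℕ → S) (a : ℕ → A)
    (hdyn : ∀ t, s (t + 1) = f (s t) (a t))
    (h0 : Q (s 0) (a 0) ≤ 0)
    (hshield : ∀ t, 1 ≤ t → Q (s t) (a t) = (⨅ a' : A, Q (s t) a') ∨ Q (s t) (a t) ≤ 0) :
    ∀ t, Q (s t) (a t) ≤ 0 ∧ g (s t) ≤ 0 := by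
  exact shielding_safe_general (fun s a => (hQ s a).ge) hdyn h0 fun t ht =>
    (hshield t ht).imp_left fun h a' => h.trans_le (ciInf_le (Set.finite_range _).bddBelow a')
end

section
/- Let S be a set of states, A a finite nonempty set of actions, f : S × A → S deterministic dynamics, g : S → ℝ a bounded safety margin function, and γ ∈ [0,1). On the space of bounded functions Q : S × A → ℝ equipped with the supremum norm, the discounted safety Bellman operator (B_γ Q)(s,a) = (1−γ)·g(s) + γ·max{ g(s), min_{a'∈A} Q(f(s,a), a') } maps bounded functions to bounded functions and is a contraction with modulus γ: ‖B_γ Q_1 − B_γ Q_2‖_∞ ≤ γ‖Q_1 − Q_2‖_∞ for all bounded Q_1, Q_2. Consequently B_γ has a unique bounded fixed point. -/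
/-- The discounted safety Bellman operator
`(B_γ Q)(s,a) = (1−γ)·g(s) + γ·max{ g(s), min_{a'∈A} Q(f(s,a), a') }`. -/
noncomputable def dsbeOperator {S A : Type*} [Fintype A] [Nonempty A]
    (f : S → A → S) (g : S → ℝ) (γ : ℝ) (Q : S → A → ℝ) : S → A → ℝ :=
  fun s a => (1 - γ) * g s + γ * max (g s) (⨅ a' : A, Q (f s a) a')

/-- `Q : S → A → ℝ` is bounded (in supremum norm). -/
def IsBoundedQ {S A : Type*} (Q : S → A → ℝ) : Prop :=
  ∃ C : ℝ, ∀ s a, |Q s a| ≤ C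

/-! The maps `u ↦ ⨅ i, u i` and `x ↦ max c x` are `1`-Lipschitz for the supremum norm, so the
factor `γ` in front of the maximum makes the Bellman operator a contraction. Bounded functions
on `S × A` form the Banach space `ℓ^∞`, and Banach's fixed point theorem applies. -/

open scoped ENNReal NNReal

section Infimum

variable {ι α : Type*} [ConditionallyCompleteLinearOrder α] [AddCommGroup α]
  [IsOrderedAddMonoid α] {u v : ι → α} {C : α}

theorem bddBelow_range_of_abs_le (h : ∀ i, |u i| ≤ C) : BddBelow (Set.range u) :=
  ⟨-C, Set.forall_mem_range.mpr fun i ↦ neg_le_of_abs_le (h i)⟩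

variable [Nonempty ι]

theorem ciInf_sub_ciInf_le (hu : BddBelow (Set.range u)) (h : ∀ i, u i - v i ≤ C) :
    (⨅ i, u i) - ⨅ i, v i ≤ C := by
  have hlower : (⨅ i, u i) - C ≤ ⨅ i, v i :=
    le_ciInf fun i ↦ sub_le_comm.mp <| (sub_le_sub_right (ciInf_le hu i) (v i)).trans (h i)
  exact sub_le_comm.mp hlower

theorem abs_ciInf_sub_ciInf_le (hu : BddBelow (Set.range u)) (hv : BddBelow (Set.range v))
    (h : ∀ i, |u i - v i| ≤ C) : |(⨅ i, u i) - ⨅ i, v i| ≤ C :=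
  abs_sub_le_iff.mpr
    ⟨ciInf_sub_ciInf_le hu fun i ↦ (abs_sub_le_iff.mp (h i)).1,
      ciInf_sub_ciInf_le hv fun i ↦ (abs_sub_le_iff.mp (h i)).2⟩

theorem abs_ciInf_le (h : ∀ i, |u i| ≤ C) : |⨅ i, u i| ≤ C := by
  simpa using abs_ciInf_sub_ciInf_le (v := 0) (bddBelow_range_of_abs_le h)
    (bddBelow_range_of_abs_le (C := 0) (by simp)) (by simpa using h)

end Infimum

theorem existsUnique_lp_infty_fixedPoint {ι : Type*} {E : ι → Type*}
    [∀ i, NormedAddCommGroup (E i)] [∀ i, CompleteSpace (E i)]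
    (T : (∀ i, E i) → ∀ i, E i) {K : ℝ≥0} (hK : K < 1)
    (hmem : ∀ F, Memℓp F ∞ → Memℓp (T F) ∞)
    (hT : ∀ F G, Memℓp F ∞ → Memℓp G ∞ → ∀ C : ℝ, (∀ i, ‖F i - G i‖ ≤ C) →
      ∀ i, ‖T F i - T G i‖ ≤ K * C) :
    ∃! F : lp E ∞, T F = F := by
  let T' : lp E ∞ → lp E ∞ := fun F ↦ ⟨T F, hmem F F.2⟩
  have hT' : ContractingWith K T' := by
    refine ⟨hK, LipschitzWith.of_dist_le_mul fun F G ↦ ?_⟩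
    rw [dist_eq_norm, dist_eq_norm]
    exact lp.norm_le_of_forall_le (by positivity) <|
      hT F G F.2 G.2 _ fun i ↦ lp.norm_apply_le_norm ENNReal.top_ne_zero (F - G) i
  exact ⟨hT'.fixedPoint, congrArg Subtype.val hT'.fixedPoint_isFixedPt,
    fun F hF ↦ hT'.fixedPoint_unique (Subtype.ext hF)⟩

/-- The discounted safety Bellman operator for an arbitrary action set, with an infimum over
actions in place of the minimum. The infimum is only meaningful when `Q (f s a)` is bounded below:
otherwise Lean's `⨅` is `0`. -/
noncomputable def safetyBellman {S A : Type*} (f : S → A → S) (g : S → ℝ) (γ : ℝ)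
    (Q : S → A → ℝ) : S → A → ℝ :=
  fun s a ↦ (1 - γ) * g s + γ * max (g s) (⨅ a' : A, Q (f s a) a')

theorem dsbeOperator_eq_safetyBellman {S A : Type*} [Fintype A] [Nonempty A] (f : S → A → S)
    (g : S → ℝ) (γ : ℝ) : dsbeOperator f g γ = safetyBellman f g γ :=
  rfl

section SafetyBellman

variable {S A : Type*}

theorem IsBoundedQ.bddBelow_range {Q : S → A → ℝ} (hQ : IsBoundedQ Q) (s : S) :
    BddBelow (Set.range (Q s)) :=
  let ⟨_, hC⟩ := hQ
  bddBelow_range_of_abs_le (hC s)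

theorem isBoundedQ_iff_memℓp_uncurry {Q : S → A → ℝ} :
    IsBoundedQ Q ↔ Memℓp (Function.uncurry Q) ∞ := by
  simp only [IsBoundedQ, memℓp_infty_iff, bddAbove_def, Set.forall_mem_range, Prod.forall,
    Function.uncurry_apply_pair, Real.norm_eq_abs]

/-- Bounded functions `S → A → ℝ` as elements of `ℓ^∞(S × A)`, the Banach space in which the
fixed point of the Bellman operator is found. -/
def boundedQEquivLp : {Q : S → A → ℝ // IsBoundedQ Q} ≃ lp (fun _ : S × A ↦ ℝ) ∞ :=
  (Equiv.curry S A ℝ).symm.subtypeEquiv fun _ ↦ isBoundedQ_iff_memℓp_uncurry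

variable [Nonempty A]

theorem IsBoundedQ.safetyBellman {g : S → ℝ} (hg : ∃ C : ℝ, ∀ s, |g s| ≤ C) {Q : S → A → ℝ}
    (hQ : IsBoundedQ Q) (f : S → A → S) (γ : ℝ) : IsBoundedQ (safetyBellman f g γ Q) := by
  obtain ⟨G, hG⟩ := hg
  obtain ⟨C, hC⟩ := hQ
  refine ⟨|1 - γ| * G + |γ| * max G C, fun s a ↦ ?_⟩
  have hmax : |max (g s) (⨅ a', Q (f s a) a')| ≤ max G C :=
    abs_max_le_max_abs_abs.trans <| max_le_max (hG s) (abs_ciInf_le (hC (f s a)))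
  calc |(1 - γ) * g s + γ * max (g s) (⨅ a', Q (f s a) a')|
      ≤ |1 - γ| * |g s| + |γ| * |max (g s) (⨅ a', Q (f s a) a')| := by
        simpa only [abs_mul] using
          abs_add_le ((1 - γ) * g s) (γ * max (g s) (⨅ a', Q (f s a) a'))
    _ ≤ |1 - γ| * G + |γ| * max G C := by gcongr; exact hG s

theorem abs_safetyBellman_sub_safetyBellman_le (f : S → A → S) (g : S → ℝ) (γ : ℝ)
    {Q₁ Q₂ : S → A → ℝ} (hQ₁ : IsBoundedQ Q₁) (hQ₂ : IsBoundedQ Q₂) {C : ℝ}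
    (h : ∀ s a, |Q₁ s a - Q₂ s a| ≤ C) (s : S) (a : A) :
    |safetyBellman f g γ Q₁ s a - safetyBellman f g γ Q₂ s a| ≤ |γ| * C := by
  set m₁ := ⨅ a', Q₁ (f s a) a'
  set m₂ := ⨅ a', Q₂ (f s a) a'
  calc |safetyBellman f g γ Q₁ s a - safetyBellman f g γ Q₂ s a|
      = |γ| * |max (g s) m₁ - max (g s) m₂| := by
        rw [safetyBellman, safetyBellman, add_sub_add_left_eq_sub, ← mul_sub, abs_mul]
    _ ≤ |γ| * |m₁ - m₂| := by
        gcongr |γ| * ?_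
        simpa only [max_comm] using abs_max_sub_max_le_abs m₁ m₂ (g s)
    _ ≤ |γ| * C := by
        gcongr |γ| * ?_
        exact abs_ciInf_sub_ciInf_le (hQ₁.bddBelow_range _) (hQ₂.bddBelow_range _) (h (f s a))

theorem existsUnique_safetyBellman_fixedPoint (f : S → A → S) {g : S → ℝ}
    (hg : ∃ C : ℝ, ∀ s, |g s| ≤ C) {γ : ℝ} (hγ : |γ| < 1) :
    ∃! Q : {Q : S → A → ℝ // IsBoundedQ Q}, safetyBellman f g γ Q.1 = Q.1 := by
  let T : (S × A → ℝ) → S × A → ℝ := fun F ↦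
    Function.uncurry (safetyBellman f g γ (Function.curry F))
  have hbdd {F : S × A → ℝ} (hF : Memℓp F ∞) : IsBoundedQ (Function.curry F) :=
    isBoundedQ_iff_memℓp_uncurry.mpr hF
  have hfix : ∃! F : lp (fun _ : S × A ↦ ℝ) ∞, T F = F :=
    existsUnique_lp_infty_fixedPoint T (K := ‖γ‖₊) hγ
      (fun F hF ↦ isBoundedQ_iff_memℓp_uncurry.mp ((hbdd hF).safetyBellman hg f γ))
      (fun F G hF hG C h p ↦ abs_safetyBellman_sub_safetyBellman_le f g γ (hbdd hF) (hbdd hG)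
        (fun s a ↦ h (s, a)) p.1 p.2)
  exact (boundedQEquivLp.existsUnique_congr fun Q ↦
    (Equiv.curry S A ℝ).symm.injective.eq_iff.symm).mpr hfix

end SafetyBellman

theorem dsbe_contraction_unique_fixed_point_general {S A : Type*} [Nonempty A]
    (f : S → A → S) (g : S → ℝ) (hg : ∃ C : ℝ, ∀ s, |g s| ≤ C) (γ : ℝ) (hγ : |γ| < 1) :
    (∀ Q : S → A → ℝ, IsBoundedQ Q → IsBoundedQ (safetyBellman f g γ Q)) ∧
      (∀ Q₁ Q₂ : S → A → ℝ, IsBoundedQ Q₁ → IsBoundedQ Q₂ →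
        ∀ C : ℝ, (∀ s a, |Q₁ s a - Q₂ s a| ≤ C) →
          ∀ s a, |safetyBellman f g γ Q₁ s a - safetyBellman f g γ Q₂ s a| ≤ |γ| * C) ∧
      (∃! Q : {Q : S → A → ℝ // IsBoundedQ Q}, safetyBellman f g γ Q.1 = Q.1) :=
  ⟨fun _ hQ ↦ hQ.safetyBellman hg f γ,
    fun _ _ hQ₁ hQ₂ _ h ↦ abs_safetyBellman_sub_safetyBellman_le f g γ hQ₁ hQ₂ h,
    existsUnique_safetyBellman_fixedPoint f hg hγ⟩

/-- **Contraction of the discounted safety Bellman operator.**  For bounded `g` and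
`γ ∈ [0,1)`, the operator `B_γ` maps bounded functions to bounded functions and is a
`γ`-contraction in the supremum norm (`‖B_γQ₁ − B_γQ₂‖_∞ ≤ γ‖Q₁ − Q₂‖_∞`, expressed
via arbitrary uniform bounds `C` on `|Q₁ − Q₂|`); consequently it has a unique
bounded fixed point. -/
theorem dsbe_contraction_unique_fixed_point
    {S A : Type*} [Fintype A] [Nonempty A]
    (f : S → A → S) (g : S → ℝ) (hg : ∃ C : ℝ, ∀ s, |g s| ≤ C)
    (γ : ℝ) (hγ0 : 0 ≤ γ) (hγ1 : γ < 1) :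
    (∀ Q : S → A → ℝ, IsBoundedQ Q → IsBoundedQ (dsbeOperator f g γ Q)) ∧
      (∀ Q₁ Q₂ : S → A → ℝ, IsBoundedQ Q₁ → IsBoundedQ Q₂ →
        ∀ C : ℝ, (∀ s a, |Q₁ s a - Q₂ s a| ≤ C) →
          ∀ s a, |dsbeOperator f g γ Q₁ s a - dsbeOperator f g γ Q₂ s a| ≤ γ * C) ∧
      (∃! Q : {Q : S → A → ℝ // IsBoundedQ Q}, dsbeOperator f g γ Q.1 = Q.1) := by
  simpa only [dsbeOperator_eq_safetyBellman, abs_of_nonneg hγ0] using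
    dsbe_contraction_unique_fixed_point_general f g hg γ ((abs_of_nonneg hγ0).trans_lt hγ1)
end
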